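/- Let N ≥ 1 and let μ be the product of N copies of the standard Gaussian measure on ℝ. Let ν be the pushforward of μ under the map u ↦ ∑_{i=1}^N (max(u_i,0))². Then the characteristic function of ν is given, for every w ∈ ℝ, by φ(w) = 2^{−N}·(1 + (1 − 2·i·w)^{−1/2})^N, where (1 − 2·i·w)^{−1/2} is the principal branch complex power. -/

import Mathlib

open MeasureTheory ProbabilityTheory Complex

/-!
For every function `f` and real `x`, `f (max x 0) + f (max (-x) 0) = f 0 + f |x|`. Integrating this
against a symmetric probability measure shows that the transform of the squared positive part is the
mean of `1` and the transform of the full square. For a centred Gaussian the latter is a Gaussian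
integral, equal to `(1 - 2vz)^(-1/2)`, and independence turns the sum over coordinates into a
product.
-/

open scoped NNReal

section SymmetricMeasure

variable {α E : Type*} [AddCommGroup α] [LinearOrder α] [IsOrderedAddMonoid α]

lemma comp_max_zero_add_comp_max_neg_zero [AddCommMonoid E] (f : α → E) (x : α) :
    f (max x 0) + f (max (-x) 0) = f 0 + f |x| := by
  rcases le_total x 0 with hx | hx
  · rw [max_eq_right hx, max_eq_left (neg_nonneg.2 hx), abs_of_nonpos hx]
  · rw [max_eq_left hx, max_eq_right (neg_nonpos.2 hx), abs_of_nonneg hx, add_comm]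

variable [MeasurableSpace α] [NormedAddCommGroup E] {μ : Measure α} {f : α → E}

lemma integrable_comp_max_zero [TopologicalSpace α] [OrderClosedTopology α]
    [OpensMeasurableSpace α] [IsFiniteMeasure μ] (hf : Integrable (fun x ↦ f |x|) μ) :
    Integrable (fun x ↦ f (max x 0)) μ := by
  refine (Integrable.piecewise (measurableSet_Ioi (a := (0 : α))) hf.integrableOn
    (integrable_const (f 0)).integrableOn).congr (.of_forall fun x ↦ ?_)
  rcases lt_or_ge 0 x with hx | hx
  · simp [hx, hx.le, abs_of_pos]
  · simp [hx, hx.not_gt]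

lemma two_nsmul_integral_comp_max_zero [MeasurableNeg α] [NormedSpace ℝ E] [CompleteSpace E]
    [IsProbabilityMeasure μ] [μ.IsNegInvariant] (hf : Integrable (fun x ↦ f (max x 0)) μ) :
    2 • ∫ x, f (max x 0) ∂μ = f 0 + ∫ x, f |x| ∂μ := by
  have hf_neg : Integrable (fun x ↦ f (max (-x) 0)) μ := hf.comp_neg
  have hf_abs : Integrable (fun x ↦ f |x|) μ :=
    ((hf.add hf_neg).sub (integrable_const (f 0))).congr (.of_forall fun x ↦ by
      simp [comp_max_zero_add_comp_max_neg_zero])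
  calc 2 • ∫ x, f (max x 0) ∂μ
      = ∫ x, f (max x 0) ∂μ + ∫ x, f (max (-x) 0) ∂μ := by
        rw [integral_neg_eq_self (fun x ↦ f (max x 0)) μ, two_nsmul]
    _ = ∫ x, (f 0 + f |x|) ∂μ := by
        rw [← integral_add hf hf_neg]
        simp_rw [comp_max_zero_add_comp_max_neg_zero]
    _ = f 0 + ∫ x, f |x| ∂μ := by
        rw [integral_add (integrable_const _) hf_abs, integral_const, probReal_univ, one_smul]

end SymmetricMeasure

lemma complexMGF_sq_max_zero {μ : Measure ℝ} [IsProbabilityMeasure μ] [μ.IsNegInvariant] {z : ℂ}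
    (hz : Integrable (fun x : ℝ ↦ cexp (z * (x ^ 2 : ℝ))) μ) :
    complexMGF (fun x ↦ max x 0 ^ 2) μ z = (1 + complexMGF (fun x ↦ x ^ 2) μ z) / 2 := by
  let f : ℝ → ℂ := fun x ↦ cexp (z * (x ^ 2 : ℝ))
  have h_max : Integrable (fun x ↦ f (max x 0)) μ :=
    integrable_comp_max_zero (by simpa only [f, sq_abs] using hz)
  have h_split : 2 • ∫ x, f (max x 0) ∂μ = f 0 + ∫ x, f |x| ∂μ :=
    two_nsmul_integral_comp_max_zero h_max
  simp only [f, sq_abs, nsmul_eq_mul, Nat.cast_ofNat, ne_eq, OfNat.ofNat_ne_zero, not_false_eq_true,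
    zero_pow, ofReal_zero, mul_zero, exp_zero] at h_split
  rw [eq_div_iff two_ne_zero, mul_comm]
  exact h_split

lemma complexMGF_sum_pi {ι : Type*} [Fintype ι] {Ω : ι → Type*} [∀ i, MeasurableSpace (Ω i)]
    (μ : ∀ i, Measure (Ω i)) [∀ i, SigmaFinite (μ i)] (X : ∀ i, Ω i → ℝ) (z : ℂ) :
    complexMGF (fun ω ↦ ∑ i, X i (ω i)) (Measure.pi μ) z = ∏ i, complexMGF (X i) (μ i) z := by
  simp only [complexMGF, ofReal_sum, Finset.mul_sum, exp_sum]
  exact integral_fintype_prod_eq_prod fun i x ↦ cexp (z * X i x)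

lemma ofReal_mul_cpow {r : ℝ} (hr : 0 ≤ r) (z s : ℂ) : (r * z) ^ s = (r : ℂ) ^ s * z ^ s := by
  rcases eq_or_ne s 0 with rfl | hs
  · simp only [cpow_zero, mul_one]
  rcases hr.eq_or_lt with rfl | hr
  · simp only [ofReal_zero, zero_mul, zero_cpow hs]
  rcases eq_or_ne z 0 with rfl | hz
  · simp only [mul_zero, zero_cpow hs]
  have hr' : (r : ℂ) ≠ 0 := ofReal_ne_zero.2 hr.ne'
  rw [cpow_def_of_ne_zero (mul_ne_zero hr' hz), cpow_def_of_ne_zero hr', cpow_def_of_ne_zero hz,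
    log_ofReal_mul hr hz, ofReal_log hr.le, add_mul, exp_add]

section Gaussian

instance isNegInvariant_gaussianReal_zero (v : ℝ≥0) : (gaussianReal 0 v).IsNegInvariant :=
  ⟨gaussianReal_map_neg.trans (by rw [neg_zero])⟩

lemma gaussianPDFReal_zero_smul_cexp_mul_sq {v : ℝ≥0} (hv : v ≠ 0) (z : ℂ) (x : ℝ) :
    gaussianPDFReal 0 v x • cexp (z * (x ^ 2 : ℝ)) =
      (√(2 * Real.pi * v) : ℂ)⁻¹ * cexp (-((1 - 2 * v * z) / (2 * v)) * x ^ 2) := by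
  have hv' : (v : ℂ) ≠ 0 := mod_cast hv
  rw [gaussianPDFReal, real_smul]
  push_cast
  rw [mul_assoc, ← exp_add]
  congr 2
  field_simp
  ring

lemma complexMGF_sq_gaussianReal {v : ℝ≥0} {z : ℂ} (hz : 2 * v * z.re < 1) :
    complexMGF (fun x ↦ x ^ 2) (gaussianReal 0 v) z = (1 - 2 * v * z) ^ (-(1 / 2 : ℂ)) := by
  rcases eq_or_ne v 0 with rfl | hv
  · simp [complexMGF]
  set a : ℂ := 1 - 2 * v * z
  have ha : 0 < a.re := by simpa [a] using hz
  have hb : 0 < (a / (2 * v)).re := by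
    have : a / (2 * v) = a / ((2 * v : ℝ) : ℂ) := by push_cast; rfl
    rw [this, div_ofReal_re]
    positivity
  have h_pi_div : (Real.pi : ℂ) / (a / (2 * v)) = (2 * Real.pi * v : ℝ) * a⁻¹ := by
    push_cast
    field_simp
  have h_sqrt : ((2 * Real.pi * v : ℝ) : ℂ) ^ (1 / 2 : ℂ) = √(2 * Real.pi * v) := by
    rw [Real.sqrt_eq_rpow, ofReal_cpow (by positivity)]
    norm_num
  have h_sqrt_ne : (√(2 * Real.pi * v) : ℂ) ≠ 0 := ofReal_ne_zero.2 (by positivity)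
  calc complexMGF (fun x ↦ x ^ 2) (gaussianReal 0 v) z
      = (√(2 * Real.pi * v) : ℂ)⁻¹ * ∫ x : ℝ, cexp (-(a / (2 * v)) * x ^ 2) := by
        rw [complexMGF, integral_gaussianReal_eq_integral_smul hv, ← integral_const_mul]
        simp_rw [gaussianPDFReal_zero_smul_cexp_mul_sq hv]
        rfl
    _ = (√(2 * Real.pi * v) : ℂ)⁻¹ * (√(2 * Real.pi * v) * a⁻¹ ^ (1 / 2 : ℂ)) := by
        rw [integral_gaussian_complex hb, h_pi_div, ofReal_mul_cpow (by positivity), h_sqrt]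
    _ = a ^ (-(1 / 2 : ℂ)) := by
        rw [inv_mul_cancel_left₀ h_sqrt_ne, inv_cpow _ _ (slitPlane_arg_ne_pi (.inl ha)), cpow_neg]

lemma integrable_cexp_mul_sq_gaussianReal {v : ℝ≥0} {z : ℂ} (hz : 2 * v * z.re < 1) :
    Integrable (fun x : ℝ ↦ cexp (z * (x ^ 2 : ℝ))) (gaussianReal 0 v) := by
  -- The Bochner integral of a non-integrable function is `0`, whereas this one is a nonzero power.
  refine .of_integral_ne_zero (ne_of_eq_of_ne (complexMGF_sq_gaussianReal hz) ?_)
  have h_base : 1 - 2 * (v : ℂ) * z ≠ 0 := slitPlane_ne_zero (.inl (by simpa using hz))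
  exact cpow_ne_zero_iff.2 (.inl h_base)

end Gaussian

theorem charFun_sum_sq_pos_parts_of_gaussian_general {ι : Type*} [Fintype ι] (v : ι → ℝ≥0) {z : ℂ}
    (hz : ∀ i, 2 * v i * z.re < 1) :
    complexMGF (fun u : ι → ℝ ↦ ∑ i, max (u i) 0 ^ 2)
        (Measure.pi fun i ↦ gaussianReal 0 (v i)) z =
      ∏ i, (1 + (1 - 2 * v i * z) ^ (-(1 / 2 : ℂ))) / 2 := by
  rw [complexMGF_sum_pi _ (fun _ x ↦ max x 0 ^ 2)]
  refine Finset.prod_congr rfl fun i _ ↦ ?_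
  rw [complexMGF_sq_max_zero (integrable_cexp_mul_sq_gaussianReal (hz i)),
    complexMGF_sq_gaussianReal (hz i)]

theorem charFun_sum_sq_pos_parts_of_gaussian (N : ℕ) (hN : 1 ≤ N) (w : ℝ) :
    ∫ x : ℝ, Complex.exp (Complex.I * w * x)
        ∂(Measure.map (fun u : Fin N → ℝ => ∑ i, (max (u i) 0) ^ 2)
          (Measure.pi fun _ : Fin N => gaussianReal 0 1)) =
      (2 : ℂ) ^ (-(N : ℤ)) * (1 + ((1 : ℂ) - 2 * Complex.I * w) ^ (-(1 / 2 : ℂ))) ^ N := by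
  rw [integral_map (Measurable.aemeasurable (by fun_prop)) (by fun_prop)]
  refine (charFun_sum_sq_pos_parts_of_gaussian_general (fun _ ↦ 1) (by simp)).trans ?_
  simp [div_eq_inv_mul, mul_pow, mul_assoc]
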